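/- For every integer k ≥ 7, every hinge non-edge {a_i, b_i} of the ring of k roofs R_k is an implied non-edge: rk₃(R_k + a_ib_i) = rk₃(R_k) = 8k. Hence R_k is a nucleation-free, independent graph possessing implied non-edges. -/

import Mathlib

/-! Write `aᵢ = (i, 0)`, `bᵢ = (i, 1)`, `cᵢ = (i, 2)`; the `i`-th roof has the eight non-hinge edges
of the complete graph on `aᵢ₋₁, bᵢ₋₁, aᵢ, bᵢ, cᵢ`, so the ring of `k` roofs has `8k` edges.

*Upper bound* (`genRank_addHinge_le`). Five points of `ℝ³` have an affine dependence `l`, and the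
weights `l u * l v` form a self-stress of the complete graph on them (`roof_stress`). The `k` stresses
so obtained, one per roof, have a nontrivial combination vanishing on `k - 1` of the `k` hinges. If no
hinge is collapsed to a point, this combination is a nonzero self-stress of the ring of roofs plus one
hinge (`hingedRows_dependent`), whose rank is therefore at most `8k`. Linear independence being an
open condition, the bound extends to all placements.

*Lower bound* (`special_linearIndependent`). Let the hinges span the lines through `(t, -t², 0)` and
`(t³, t⁴, 1)`, `t = 0, …, k - 1`, and let `cᵢ` be the midpoint of `aᵢ₋₁` and `bᵢ₋₁`. In a self-stress
the edges at `cᵢ` act as a bar along the hinge, and the four cross bars between consecutive hinges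
transmit a wrench (a force and a moment) which by equilibrium is the same for all roofs. It has zero
power about each hinge line, since the cross bars meet it. The Plücker coordinates of the hinge lines
are independent polynomials of degree at most five in `t`, so they span `ℝ⁶` and the wrench vanishes.
Consecutive hinge lines being skew, all weights then vanish, and the rank is `8k`.

*Nucleation-freeness* (`numEdges_induce_le`). Every set of `s ≥ 4` vertices spans at most `3s - 7`
edges, hence the induced subgraph has rank below `3s - 6`. This is proved by removing vertices of
degree at most three; a set with all degrees at least four meets every hinge, and a local count gives
`3s - e ≥ k ≥ 7` for its number `e` of edges. -/

open SimpleGraph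

variable {V : Type*}

/-- The rigidity row of an (ordered) pair of vertices at a framework `p`. -/
def rigidityRow [DecidableEq V] (p : V → Fin 3 → ℝ) (i j : V) : V → Fin 3 → ℝ :=
  fun k => if k = i then p i - p j else if k = j then p j - p i else 0

/-- The rank of the rigidity rows of `G` at `p`. -/
noncomputable def rankAt [DecidableEq V] (G : SimpleGraph V) (p : V → Fin 3 → ℝ) : ℕ :=
  Module.finrank ℝ (Submodule.span ℝ
    {w : V → Fin 3 → ℝ | ∃ i j, G.Adj i j ∧ w = rigidityRow p i j})

/-- generic 3-dimensional rank of a graph. -/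
noncomputable def genRank [DecidableEq V] (G : SimpleGraph V) : ℕ :=
  sSup {n : ℕ | ∃ p : V → Fin 3 → ℝ, n = rankAt G p}

noncomputable def numEdges (G : SimpleGraph V) : ℕ := G.edgeSet.ncard

def IsIndependent [DecidableEq V] (G : SimpleGraph V) : Prop := genRank G = numEdges G

def NucleationFree [DecidableEq V] (G : SimpleGraph V) : Prop :=
  ∀ S : Finset V, 5 ≤ S.card → genRank (G.induce (S : Set V)) ≠ 3 * S.card - 6

def addEdge (G : SimpleGraph V) (x y : V) : SimpleGraph V :=
  G ⊔ SimpleGraph.fromEdgeSet {s(x, y)}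

def IsImpliedNonEdge [DecidableEq V] (G : SimpleGraph V) (x y : V) : Prop :=
  x ≠ y ∧ ¬ G.Adj x y ∧ genRank (addEdge G x y) = genRank G

/-- The ring of `k` roofs: vertex `(i,0)` is the hinge vertex `aᵢ`, `(i,1)` is `bᵢ`,
and `(i,2)` is the apex `cᵢ` of the roof `Bᵢ` spanning the hinges `{aᵢ₋₁,bᵢ₋₁}` and
`{aᵢ,bᵢ}`. -/
def ringOfRoofs (k : ℕ) : SimpleGraph (ZMod k × Fin 3) :=
  SimpleGraph.fromRel (fun x y =>
    (y.1 = x.1 + 1 ∧ x.2 ≠ 2 ∧ y.2 ≠ 2) ∨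
    (x.2 = 2 ∧ y.2 ≠ 2 ∧ (y.1 = x.1 ∨ y.1 + 1 = x.1)))

/-! ### Rigidity rows and generic rank -/

lemma rigidityRow_apply [DecidableEq V] (p : V → Fin 3 → ℝ) (i j w : V) (m : Fin 3) :
    rigidityRow p i j w m = (if w = i then 1 else 0) * (p i m - p j m)
      + (if w = j then 1 else 0) * (p j m - p i m) := by
  unfold rigidityRow
  by_cases h1 : w = i <;> by_cases h2 : w = j
  · subst h1; subst h2; simp
  · simp [h1]
    intro h; exact absurd (h1.trans h) h2
  · subst h2; simp [h1]
  · simp [h1, h2]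

lemma rigidityRow_comm [DecidableEq V] (p : V → Fin 3 → ℝ) (i j : V) :
    rigidityRow p i j = rigidityRow p j i := by
  ext w m
  rw [rigidityRow_apply, rigidityRow_apply]
  ring

lemma rankAt_le_numEdges [DecidableEq V] [Fintype V] (G : SimpleGraph V) (p : V → Fin 3 → ℝ) :
    rankAt G p ≤ numEdges G := by
  classical
  let f : Sym2 V → V → Fin 3 → ℝ :=
    Sym2.lift ⟨fun i j => rigidityRow p i j, fun i j => rigidityRow_comm p i j⟩
  have hs : {w : V → Fin 3 → ℝ | ∃ i j, G.Adj i j ∧ w = rigidityRow p i j} ⊆ f '' G.edgeSet := by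
    rintro w ⟨i, j, hij, rfl⟩
    exact ⟨s(i, j), hij, rfl⟩
  have hfin : (f '' G.edgeSet).Finite := (Set.toFinite _).image _
  unfold rankAt numEdges
  have := hfin.fintype
  calc _ ≤ Module.finrank ℝ (Submodule.span ℝ (f '' G.edgeSet)) :=
        Submodule.finrank_mono (Submodule.span_mono hs)
    _ ≤ (f '' G.edgeSet).toFinset.card := finrank_span_le_card _
    _ = (f '' G.edgeSet).ncard := (Set.ncard_eq_toFinset_card' _).symm
    _ ≤ _ := Set.ncard_image_le (Set.toFinite _)

lemma genRank_le [DecidableEq V] (G : SimpleGraph V) (m : ℕ) (h : ∀ p, rankAt G p ≤ m) :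
    genRank G ≤ m := by
  apply csSup_le'
  rintro n ⟨p, rfl⟩
  exact h p

lemma rankAt_le_genRank [DecidableEq V] [Fintype V] (G : SimpleGraph V) (p : V → Fin 3 → ℝ) :
    rankAt G p ≤ genRank G := by
  apply le_csSup
  · refine ⟨numEdges G, ?_⟩
    rintro n ⟨p, rfl⟩
    exact rankAt_le_numEdges G p
  · exact ⟨p, rfl⟩

lemma genRank_le_numEdges [DecidableEq V] [Fintype V] (G : SimpleGraph V) :
    genRank G ≤ numEdges G :=
  genRank_le _ _ (rankAt_le_numEdges G)

/-! ### The edges of the ring of roofs -/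

/-- The two ends of the `e.2`-th edge of the `e.1`-th roof: four cross edges between the hinges
`e.1 - 1` and `e.1`, then the four edges at the apex. -/
def roofEnds {k : ℕ} (e : ZMod k × Fin 8) : (ZMod k × Fin 3) × (ZMod k × Fin 3) :=
  ![((e.1 - 1, 0), (e.1, 0)), ((e.1 - 1, 0), (e.1, 1)),
    ((e.1 - 1, 1), (e.1, 0)), ((e.1 - 1, 1), (e.1, 1)),
    ((e.1, 2), (e.1 - 1, 0)), ((e.1, 2), (e.1 - 1, 1)),
    ((e.1, 2), (e.1, 0)), ((e.1, 2), (e.1, 1))] e.2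

lemma fin3_cases (x : Fin 3) : x = 0 ∨ x = 1 ∨ x = 2 := by
  fin_cases x <;> simp

lemma exists_roofEnds {k : ℕ} {u v : ZMod k × Fin 3} (h : (ringOfRoofs k).Adj u v) :
    ∃ e, roofEnds e = (u, v) ∨ roofEnds e = (v, u) := by
  suffices H : ∀ u v : ZMod k × Fin 3, ((v.1 = u.1 + 1 ∧ u.2 ≠ 2 ∧ v.2 ≠ 2) ∨
      (u.2 = 2 ∧ v.2 ≠ 2 ∧ (v.1 = u.1 ∨ v.1 + 1 = u.1))) → ∃ e, roofEnds e = (u, v) by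
    rw [ringOfRoofs, SimpleGraph.fromRel_adj] at h
    rcases h with ⟨-, h | h⟩
    · obtain ⟨e, he⟩ := H u v h
      exact ⟨e, Or.inl he⟩
    · obtain ⟨e, he⟩ := H v u h
      exact ⟨e, Or.inr he⟩
  rintro ⟨i, x⟩ ⟨j, y⟩ h
  simp only at h
  rcases h with ⟨rfl, hx, hy⟩ | ⟨rfl, hy, rfl | rfl⟩
  · rcases fin3_cases x with rfl | rfl | rfl <;> rcases fin3_cases y with rfl | rfl | rfl <;>
      simp at hx hy
    · exact ⟨(i + 1, 0), by simp [roofEnds]⟩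
    · exact ⟨(i + 1, 1), by simp [roofEnds]⟩
    · exact ⟨(i + 1, 2), by simp [roofEnds]⟩
    · exact ⟨(i + 1, 3), by simp [roofEnds]⟩
  · rcases fin3_cases y with rfl | rfl | rfl <;> simp at hy
    · exact ⟨(j, 6), by simp [roofEnds]⟩
    · exact ⟨(j, 7), by simp [roofEnds]⟩
  · rcases fin3_cases y with rfl | rfl | rfl <;> simp at hy
    · exact ⟨(j + 1, 4), by simp [roofEnds]⟩
    · exact ⟨(j + 1, 5), by simp [roofEnds]⟩

lemma roofEnds_adj {k : ℕ} (hk : 7 ≤ k) (e : ZMod k × Fin 8) :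
    (ringOfRoofs k).Adj (roofEnds e).1 (roofEnds e).2 := by
  have : Fact (1 < k) := ⟨by omega⟩
  obtain ⟨i, m⟩ := e
  fin_cases m <;> simp [roofEnds, ringOfRoofs]

lemma card_ix (k : ℕ) [NeZero k] : Fintype.card (ZMod k × Fin 8) = 8 * k := by
  simp [ZMod.card, mul_comm]

lemma numEdges_le (k : ℕ) [NeZero k] : numEdges (ringOfRoofs k) ≤ 8 * k := by
  let f : ZMod k × Fin 8 → Sym2 (ZMod k × Fin 3) := fun e => s((roofEnds e).1, (roofEnds e).2)
  have hs : (ringOfRoofs k).edgeSet ⊆ f '' Set.univ := by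
    intro s
    induction s with
    | _ u v =>
      intro h
      obtain ⟨e, he | he⟩ := exists_roofEnds (h : (ringOfRoofs k).Adj u v)
      · exact ⟨e, trivial, by simp [f, he]⟩
      · exact ⟨e, trivial, by simp [f, he, Sym2.eq_swap]⟩
  calc _ ≤ (f '' Set.univ).ncard := Set.ncard_le_ncard hs (Set.toFinite _)
    _ ≤ (Set.univ : Set (ZMod k × Fin 8)).ncard := Set.ncard_image_le (Set.toFinite _)
    _ = 8 * k := by rw [Set.ncard_univ, Nat.card_eq_fintype_card, card_ix]

/-- The rows of the edges of the ring of roofs, indexed by roof and edge of the roof. -/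
noncomputable def rows {k : ℕ} (p : ZMod k × Fin 3 → Fin 3 → ℝ) (e : ZMod k × Fin 8) :
    ZMod k × Fin 3 → Fin 3 → ℝ :=
  rigidityRow p (roofEnds e).1 (roofEnds e).2

lemma le_genRank_of_linearIndependent {k : ℕ} (hk : 7 ≤ k) (p : ZMod k × Fin 3 → Fin 3 → ℝ)
    (h : LinearIndependent ℝ (rows p)) (G : SimpleGraph (ZMod k × Fin 3))
    (hG : ringOfRoofs k ≤ G) : 8 * k ≤ genRank G := by
  have : NeZero k := ⟨by omega⟩
  refine le_trans ?_ (rankAt_le_genRank G p)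
  rw [← card_ix, ← finrank_span_eq_card h]
  apply Submodule.finrank_mono
  apply Submodule.span_mono
  rintro _ ⟨e, rfl⟩
  exact ⟨_, _, hG (roofEnds_adj hk e), rfl⟩

/-! ### A placement without self-stress -/

lemma const_of_shift {k : ℕ} [NeZero k] {α : Type*} (f : ZMod k → α) (h : ∀ i, f (i + 1) = f i)
    (i : ZMod k) : f i = f 0 := by
  rw [← ZMod.natCast_rightInverse i]
  induction i.val with
  | zero => simp
  | succ n ih => rw [Nat.cast_succ, h, ih]

/-- The value at the `m`-th coordinate of the vertex `w` of a combination of the edge rows,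
grouped by roof. -/
lemma sum_rows_apply {k : ℕ} [NeZero k] (p : ZMod k × Fin 3 → Fin 3 → ℝ)
    (g : ZMod k × Fin 8 → ℝ) (w : ZMod k × Fin 3) (m : Fin 3) :
    (∑ e, g e • rows p e) w m = ∑ i, ∑ j, g (i, j) * rows p (i, j) w m := by
  rw [Finset.sum_apply, Finset.sum_apply, Fintype.sum_prod_type]
  rfl

/-- Equilibrium of a self-stress of the ring of roofs at an apex. -/
lemma stress_apex {k : ℕ} [NeZero k] (p : ZMod k × Fin 3 → Fin 3 → ℝ)
    (g : ZMod k × Fin 8 → ℝ) (h : ∑ e, g e • rows p e = 0) (i : ZMod k) (m : Fin 3) :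
    g (i, 4) * (p (i, 2) m - p (i - 1, 0) m) + g (i, 5) * (p (i, 2) m - p (i - 1, 1) m)
    + g (i, 6) * (p (i, 2) m - p (i, 0) m) + g (i, 7) * (p (i, 2) m - p (i, 1) m) = 0 := by
  have := sum_rows_apply p g (i, 2) m
  rw [h] at this
  simp [Fin.sum_univ_eight, rows, rigidityRow_apply, roofEnds, Finset.sum_add_distrib] at this
  linarith

/-- Equilibrium at the first vertex of a hinge. -/
lemma stress_hinge0 {k : ℕ} [NeZero k] (p : ZMod k × Fin 3 → Fin 3 → ℝ)
    (g : ZMod k × Fin 8 → ℝ) (h : ∑ e, g e • rows p e = 0) (i : ZMod k) (m : Fin 3) :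
    g (i, 0) * (p (i, 0) m - p (i - 1, 0) m) + g (i, 2) * (p (i, 0) m - p (i - 1, 1) m)
    + g (i, 6) * (p (i, 0) m - p (i, 2) m)
    + g (i + 1, 0) * (p (i, 0) m - p (i + 1, 0) m) + g (i + 1, 1) * (p (i, 0) m - p (i + 1, 1) m)
    + g (i + 1, 4) * (p (i, 0) m - p (i + 1, 2) m) = 0 := by
  have := sum_rows_apply p g (i, 0) m
  rw [h] at this
  have e : ∀ x : ZMod k, i = x - 1 ↔ i + 1 = x := fun x => eq_sub_iff_add_eq
  simp [Fin.sum_univ_eight, rows, rigidityRow_apply, roofEnds, Finset.sum_add_distrib, mul_add, e] at this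
  linarith

/-- Equilibrium at the second vertex of a hinge. -/
lemma stress_hinge1 {k : ℕ} [NeZero k] (p : ZMod k × Fin 3 → Fin 3 → ℝ)
    (g : ZMod k × Fin 8 → ℝ) (h : ∑ e, g e • rows p e = 0) (i : ZMod k) (m : Fin 3) :
    g (i, 1) * (p (i, 1) m - p (i - 1, 0) m) + g (i, 3) * (p (i, 1) m - p (i - 1, 1) m)
    + g (i, 7) * (p (i, 1) m - p (i, 2) m)
    + g (i + 1, 2) * (p (i, 1) m - p (i + 1, 0) m) + g (i + 1, 3) * (p (i, 1) m - p (i + 1, 1) m)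
    + g (i + 1, 5) * (p (i, 1) m - p (i + 1, 2) m) = 0 := by
  have := sum_rows_apply p g (i, 1) m
  rw [h] at this
  have e : ∀ x : ZMod k, i = x - 1 ↔ i + 1 = x := fun x => eq_sub_iff_add_eq
  simp [Fin.sum_univ_eight, rows, rigidityRow_apply, roofEnds, Finset.sum_add_distrib, mul_add, e] at this
  linarith

/-- The parameter of the `i`-th hinge in the special placement. -/
def hingeParam {k : ℕ} (i : ZMod k) : ℝ := (i.val : ℝ)

/-- The special placement: the hinges are the lines through `(t, -t², 0)` and `(t³, t⁴, 1)` for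
`t = 0, …, k - 1`, and each apex is the midpoint of the previous hinge. -/
noncomputable def specialPlacement {k : ℕ} (v : ZMod k × Fin 3) : Fin 3 → ℝ :=
  ![![hingeParam v.1, -hingeParam v.1 ^ 2, 0],
    ![hingeParam v.1 ^ 3, hingeParam v.1 ^ 4, 1],
    ![(hingeParam (v.1 - 1) + hingeParam (v.1 - 1) ^ 3) / 2,
      (-hingeParam (v.1 - 1) ^ 2 + hingeParam (v.1 - 1) ^ 4) / 2, 1 / 2]] v.2

/-- Up to sign, the expression is the volume determinant of the four points spanning the lines with
parameters `s` and `t` of the special placement: distinct lines are skew. -/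
lemma skew_ne_zero {s t : ℝ} (hs : 0 ≤ s) (ht : 0 ≤ t) (hst : s ≠ t) :
    (t - s) * (t ^ 4 - s ^ 4) + (t ^ 2 - s ^ 2) * (t ^ 3 - s ^ 3) ≠ 0 := by
  have h1 : (t - s) * (t ^ 4 - s ^ 4) + (t ^ 2 - s ^ 2) * (t ^ 3 - s ^ 3) =
      (t - s) ^ 2 * ((t + s) * (t ^ 2 + s ^ 2) + (t + s) * (t ^ 2 + t * s + s ^ 2)) := by ring
  rw [h1]
  have h2 : 0 < (t - s) ^ 2 := by
    have : t - s ≠ 0 := sub_ne_zero.mpr hst.symm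
    positivity
  have h3 : 0 < t + s := by
    rcases hs.lt_or_eq with h | h
    · linarith
    · rcases ht.lt_or_eq with h' | h'
      · linarith
      · exact absurd (h.symm.trans h') hst
  have h4 : 0 < t ^ 2 + s ^ 2 := by nlinarith [sq_nonneg (t - s)]
  have h5 : 0 ≤ t * s := by positivity
  have : 0 < (t - s) ^ 2 * ((t + s) * (t ^ 2 + s ^ 2) + (t + s) * (t ^ 2 + t * s + s ^ 2)) := by
    apply mul_pos h2
    have := mul_pos h3 h4
    have : 0 ≤ (t + s) * (t ^ 2 + t * s + s ^ 2) := by positivity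
    linarith
  exact this.ne'

/-- A polynomial of degree at most five vanishing at all hinge parameters is zero. -/
lemma coeff_eq_zero {a b c d e f : ℝ} {k : ℕ} (hk : 7 ≤ k)
    (h : ∀ i : ZMod k, a + b * hingeParam i + c * hingeParam i ^ 2 + d * hingeParam i ^ 3
      + e * hingeParam i ^ 4 + f * hingeParam i ^ 5 = 0) :
    a = 0 ∧ b = 0 ∧ c = 0 ∧ d = 0 ∧ e = 0 ∧ f = 0 := by
  have H : ∀ n : ℕ, n < 7 → a + b * n + c * (n : ℝ) ^ 2 + d * (n : ℝ) ^ 3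
      + e * (n : ℝ) ^ 4 + f * (n : ℝ) ^ 5 = 0 := by
    intro n hn
    have := h (n : ZMod k)
    rwa [hingeParam, ZMod.val_natCast_of_lt (by omega)] at this
  have h0 := H 0 (by norm_num)
  have h1 := H 1 (by norm_num)
  have h2 := H 2 (by norm_num)
  have h3 := H 3 (by norm_num)
  have h4 := H 4 (by norm_num)
  have h5 := H 5 (by norm_num)
  norm_num at h0 h1 h2 h3 h4 h5
  refine ⟨?_, ?_, ?_, ?_, ?_, ?_⟩ <;> linarith

/-- The four cross bars between the lines `t` and `s` of the special placement are independent, as the tetrahedron they span is nondegenerate: a combination with zero total force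
and zero total moment is trivial. -/
lemma bars_eq_zero {s t w0 w1 w2 w3 : ℝ}
    (hD : (s - t) * (s ^ 4 - t ^ 4) + (s ^ 2 - t ^ 2) * (s ^ 3 - t ^ 3) ≠ 0)
    (hf1 : w0 * (t - s) + w1 * (t - s ^ 3) + w2 * (t ^ 3 - s) + w3 * (t ^ 3 - s ^ 3) = 0)
    (hf2 : w0 * (-t ^ 2 + s ^ 2) + w1 * (-t ^ 2 - s ^ 4) + w2 * (t ^ 4 + s ^ 2)
      + w3 * (t ^ 4 - s ^ 4) = 0)
    (hf3 : w2 - w1 = 0)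
    (hm1 : w1 * (-t ^ 2) + w2 * s ^ 2 + w3 * (t ^ 4 - s ^ 4) = 0)
    (hm2 : w1 * (-t) + w2 * s + w3 * (s ^ 3 - t ^ 3) = 0)
    (hm3 : w0 * (-t * s ^ 2 + t ^ 2 * s) + w1 * (t * s ^ 4 + t ^ 2 * s ^ 3)
      + w2 * (-t ^ 3 * s ^ 2 - t ^ 4 * s) + w3 * (t ^ 3 * s ^ 4 - t ^ 4 * s ^ 3) = 0) :
    w0 = 0 ∧ w1 = 0 ∧ w2 = 0 ∧ w3 = 0 := by
  -- each weight is isolated by the power of the bars about the line meeting the other three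
  refine ⟨?_, ?_, ?_, ?_⟩ <;> refine (mul_eq_zero.mp ?_).resolve_right hD
  · linear_combination (t ^ 4 - s ^ 4) * hf1 + (s ^ 3 - t ^ 3) * hf2
      + (t ^ 3 * s ^ 4 - t ^ 4 * s ^ 3) * hf3 - (s ^ 3 - t ^ 3) * hm1 - (s ^ 4 - t ^ 4) * hm2
  · linear_combination -(s ^ 2 * hf1 + s * hf2 + (-t ^ 3 * s ^ 2 - t ^ 4 * s) * hf3
      - (s - t ^ 3) * hm1 + (s ^ 2 + t ^ 4) * hm2 + hm3)
  · linear_combination -(-t ^ 2 * hf1 - t * hf2 + (t * s ^ 4 + t ^ 2 * s ^ 3) * hf3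
      - (s ^ 3 - t) * hm1 - (s ^ 4 + t ^ 2) * hm2 - hm3)
  · linear_combination (-t * s ^ 2 + t ^ 2 * s) * hf3 - (s - t) * hm1 + (s ^ 2 - t ^ 2) * hm2

lemma hingeParam_ne {k : ℕ} (hk : 7 ≤ k) (i : ZMod k) : hingeParam (i - 1) ≠ hingeParam i := by
  have : Fact (1 < k) := ⟨by omega⟩
  have : NeZero k := ⟨by omega⟩
  intro h
  have h1 := ZMod.val_injective k (Nat.cast_injective h)
  simp at h1

/-- The ring of roofs has no nontrivial self-stress at the special placement. -/
lemma special_linearIndependent {k : ℕ} (hk : 7 ≤ k) :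
    LinearIndependent ℝ (rows (k := k) specialPlacement) := by
  have : NeZero k := ⟨by omega⟩
  rw [Fintype.linearIndependent_iff]
  intro g hg
  have hD : ∀ i : ZMod k, (hingeParam i - hingeParam (i - 1)) *
      (hingeParam i ^ 4 - hingeParam (i - 1) ^ 4) + (hingeParam i ^ 2 - hingeParam (i - 1) ^ 2) *
      (hingeParam i ^ 3 - hingeParam (i - 1) ^ 3) ≠ 0 := fun i =>
    skew_ne_zero (Nat.cast_nonneg _) (Nat.cast_nonneg _) (hingeParam_ne hk i)
  -- the apex is the midpoint of the previous hinge, so its edges only act as a bar along that hinge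
  have hc : ∀ i, g (i, 6) = 0 ∧ g (i, 7) = 0 ∧ g (i, 4) = g (i, 5) := by
    intro i
    have h0 := stress_apex _ g hg i 0
    have h1 := stress_apex _ g hg i 1
    have h2 := stress_apex _ g hg i 2
    have hD := hD i
    simp [specialPlacement] at h0 h1 h2
    generalize hingeParam i = s at *
    generalize hingeParam (i - 1) = t at *
    -- the multipliers are the cross products of the hinge direction with a cross edge
    have h6 : g (i, 6) = 0 := by
      refine (mul_eq_zero.mp ?_).resolve_right hD
      linear_combination -((s ^ 4 - t ^ 4) * h0 + (t ^ 3 - s ^ 3) * h1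
        + ((t ^ 3 - t) * (-t ^ 2 - s ^ 4) - (t ^ 4 + t ^ 2) * (t - s ^ 3)) * h2)
    have h7 : g (i, 7) = 0 := by
      refine (mul_eq_zero.mp ?_).resolve_right hD
      linear_combination (t ^ 2 - s ^ 2) * h0 + (t - s) * h1
        + ((t ^ 3 - t) * (s ^ 2 - t ^ 2) - (t ^ 4 + t ^ 2) * (t - s)) * h2
    rw [h6, h7] at h2
    exact ⟨h6, h7, by linarith⟩
  have hA : ∀ i m, _ := fun i m => stress_hinge0 _ g hg i m
  have hB : ∀ i m, _ := fun i m => stress_hinge1 _ g hg i m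
  simp only [(hc _).1, (hc _).2.1, (hc _).2.2, zero_mul, add_zero] at hA hB
  have hA0 := fun i => hA i 0
  have hA1 := fun i => hA i 1
  have hA2 := fun i => hA i 2
  have hB0 := fun i => hB i 0
  have hB1 := fun i => hB i 1
  have hB2 := fun i => hB i 2
  simp [specialPlacement] at hA0 hA1 hA2 hB0 hB1 hB2
  -- the total force and moment transmitted by the cross bars of the `i`-th roof
  let F1 : ZMod k → ℝ := fun i => g (i, 0) * (hingeParam (i - 1) - hingeParam i)
    + g (i, 1) * (hingeParam (i - 1) - hingeParam i ^ 3)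
    + g (i, 2) * (hingeParam (i - 1) ^ 3 - hingeParam i)
    + g (i, 3) * (hingeParam (i - 1) ^ 3 - hingeParam i ^ 3)
  let F2 : ZMod k → ℝ := fun i => g (i, 0) * (-hingeParam (i - 1) ^ 2 + hingeParam i ^ 2)
    + g (i, 1) * (-hingeParam (i - 1) ^ 2 - hingeParam i ^ 4)
    + g (i, 2) * (hingeParam (i - 1) ^ 4 + hingeParam i ^ 2)
    + g (i, 3) * (hingeParam (i - 1) ^ 4 - hingeParam i ^ 4)
  let F3 : ZMod k → ℝ := fun i => g (i, 2) - g (i, 1)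
  let M1 : ZMod k → ℝ := fun i => g (i, 1) * (-hingeParam (i - 1) ^ 2)
    + g (i, 2) * hingeParam i ^ 2 + g (i, 3) * (hingeParam (i - 1) ^ 4 - hingeParam i ^ 4)
  let M2 : ZMod k → ℝ := fun i => g (i, 1) * (-hingeParam (i - 1))
    + g (i, 2) * hingeParam i + g (i, 3) * (hingeParam i ^ 3 - hingeParam (i - 1) ^ 3)
  let M3 : ZMod k → ℝ := fun i =>
    g (i, 0) * (-hingeParam (i - 1) * hingeParam i ^ 2 + hingeParam (i - 1) ^ 2 * hingeParam i)
    + g (i, 1) * (hingeParam (i - 1) * hingeParam i ^ 4 + hingeParam (i - 1) ^ 2 * hingeParam i ^ 3)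
    + g (i, 2) * (-hingeParam (i - 1) ^ 3 * hingeParam i ^ 2 - hingeParam (i - 1) ^ 4 * hingeParam i)
    + g (i, 3) * (hingeParam (i - 1) ^ 3 * hingeParam i ^ 4
      - hingeParam (i - 1) ^ 4 * hingeParam i ^ 3)
  -- equilibrium of a whole hinge makes this wrench independent of the roof
  have e1 := const_of_shift F1 fun i => by
    simp only [F1, add_sub_cancel_right]; linear_combination hA0 i + hB0 i
  have e2 := const_of_shift F2 fun i => by
    simp only [F2, add_sub_cancel_right]; linear_combination hA1 i + hB1 i
  have e3 := const_of_shift F3 fun i => by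
    simp only [F3]; linear_combination hA2 i + hB2 i
  have e4 := const_of_shift M1 fun i => by
    simp only [M1, add_sub_cancel_right]
    linear_combination -(-hingeParam i ^ 2 * hA2 i + hingeParam i ^ 4 * hB2 i - hB1 i)
  have e5 := const_of_shift M2 fun i => by
    simp only [M2, add_sub_cancel_right]
    linear_combination -(-hingeParam i * hA2 i + hB0 i - hingeParam i ^ 3 * hB2 i)
  have e6 := const_of_shift M3 fun i => by
    simp only [M3, add_sub_cancel_right]
    linear_combination -(hingeParam i * hA1 i + hingeParam i ^ 2 * hA0 i
      + hingeParam i ^ 3 * hB1 i - hingeParam i ^ 4 * hB0 i)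
  -- every cross bar of the `i`-th roof meets the `i`-th hinge line, so the wrench has no power about
  -- that line; expanded, this is a polynomial equation in the hinge parameter
  have hz := coeff_eq_zero (a := -M3 0) (b := -F2 0 + M1 0) (c := -F1 0 - M2 0) (d := -M1 0)
    (e := -M2 0) (f := 2 * F3 0) hk fun i => by
      rw [← e1 i, ← e2 i, ← e3 i, ← e4 i, ← e5 i, ← e6 i]
      simp only [F1, F2, F3, M1, M2, M3]
      ring
  have hw : ∀ i, g (i, 0) = 0 ∧ g (i, 1) = 0 ∧ g (i, 2) = 0 ∧ g (i, 3) = 0 := by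
    intro i
    apply bars_eq_zero (hD i)
    · exact (e1 i).trans (by linarith)
    · exact (e2 i).trans (by linarith)
    · exact (e3 i).trans (by linarith)
    · exact (e4 i).trans (by linarith)
    · exact (e5 i).trans (by linarith)
    · exact (e6 i).trans (by linarith)
  -- the only force left at a hinge vertex is the one along the hinge
  have h5 : ∀ i, g (i, 5) = 0 := by
    intro i
    have := hA2 (i - 1)
    simp [(hw _).2.1, (hw _).2.2.1] at this
    exact this
  rintro ⟨i, m⟩
  fin_cases m
  · exact (hw i).1
  · exact (hw i).2.1
  · exact (hw i).2.2.1
  · exact (hw i).2.2.2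
  · exact (hc i).2.2.trans (h5 i)
  · exact h5 i
  · exact (hc i).1
  · exact (hc i).2.1

/-! ### Dependence in the presence of a hinge edge -/

lemma exists_affine_dependence (q : Fin 5 → Fin 3 → ℝ) :
    ∃ l : Fin 5 → ℝ, l ≠ 0 ∧ ∑ u, l u = 0 ∧ ∀ m, ∑ u, l u * q u m = 0 := by
  let M : Matrix (Fin 4) (Fin 5) ℝ := Matrix.of fun r u => Fin.cons (α := fun _ => ℝ) 1 (q u) r
  have h : LinearMap.ker M.mulVecLin ≠ ⊥ := LinearMap.ker_ne_bot_of_finrank_lt (by simp)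
  obtain ⟨l, hl, hne⟩ := (Submodule.ne_bot_iff _).mp h
  have hl' : ∀ r, ∑ u, M r u * l u = 0 := fun r => congrFun hl r
  refine ⟨l, hne, ?_, fun m => ?_⟩
  · simpa [M] using hl' 0
  · simpa [M, mul_comm] using hl' m.succ

/-- The products of the coefficients at the two ends of the eight edges of a roof, for an affine
dependence of its vertices `aᵢ₋₁, bᵢ₋₁, aᵢ, bᵢ, cᵢ`. -/
def roofWeight (l : Fin 5 → ℝ) : Fin 8 → ℝ :=
  ![l 0 * l 2, l 0 * l 3, l 1 * l 2, l 1 * l 3, l 4 * l 0, l 4 * l 1, l 4 * l 2, l 4 * l 3]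

/-- The vertices of the `i`-th roof. -/
def roofVert {k : ℕ} (i : ZMod k) : Fin 5 → ZMod k × Fin 3 :=
  ![(i - 1, 0), (i - 1, 1), (i, 0), (i, 1), (i, 2)]

/-- The row of the `i`-th hinge. -/
noncomputable def hingeRow {k : ℕ} (p : ZMod k × Fin 3 → Fin 3 → ℝ) (i : ZMod k) :
    ZMod k × Fin 3 → Fin 3 → ℝ :=
  rigidityRow p (i, 0) (i, 1)

/-- An affine dependence `l` of five points gives the self-stress `l u * l v` of the complete graph
on them; here the two hinge edges of a roof are moved to the other side. -/
lemma roof_stress {k : ℕ} (p : ZMod k × Fin 3 → Fin 3 → ℝ) (i : ZMod k) (l : Fin 5 → ℝ)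
    (h1 : ∑ u, l u = 0) (h2 : ∀ m, ∑ u, l u * p (roofVert i u) m = 0) :
    ∑ j, roofWeight l j • rows p (i, j) =
      -((l 0 * l 1) • hingeRow p (i - 1) + (l 2 * l 3) • hingeRow p i) := by
  funext w m
  have h2 := h2 m
  obtain ⟨D, hD⟩ : ∃ D : ZMod k × Fin 3 → ℝ, ∀ u v, rigidityRow p u v w m =
      D u * (p u m - p v m) + D v * (p v m - p u m) :=
    ⟨fun u => if w = u then 1 else 0, fun u v => rigidityRow_apply p u v w m⟩
  simp only [Fin.sum_univ_five, roofVert] at h1 h2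
  simp [Fin.sum_univ_eight, rows, hingeRow, hD, roofEnds, roofWeight] at h2 ⊢
  linear_combination
    (D (i - 1, 0) * l 0 * p (i - 1, 0) m + D (i - 1, 1) * l 1 * p (i - 1, 1) m
      + D (i, 0) * l 2 * p (i, 0) m + D (i, 1) * l 3 * p (i, 1) m + D (i, 2) * l 4 * p (i, 2) m) * h1
    - (D (i - 1, 0) * l 0 + D (i - 1, 1) * l 1 + D (i, 0) * l 2 + D (i, 1) * l 3
      + D (i, 2) * l 4) * h2

/-- If neither hinge of a roof is collapsed, the stress of `roof_stress` does not live on the two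
hinges only. -/
lemma roofWeight_ne_zero {k : ℕ} (p : ZMod k × Fin 3 → Fin 3 → ℝ)
    (hp : ∀ i : ZMod k, p (i, 0) ≠ p (i, 1)) (i : ZMod k) (l : Fin 5 → ℝ) (h0 : l ≠ 0)
    (h1 : ∑ u, l u = 0) (h2 : ∀ m, ∑ u, l u * p (roofVert i u) m = 0) : roofWeight l ≠ 0 := by
  intro h
  have hj := fun j => congrFun h j
  have e0 := hj 0
  have e1 := hj 1
  have e2 := hj 2
  have e3 := hj 3
  have e4 := hj 4
  have e5 := hj 5
  have e6 := hj 6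
  have e7 := hj 7
  simp [roofWeight, -mul_eq_zero] at e0 e1 e2 e3 e4 e5 e6 e7
  simp only [Fin.sum_univ_five, roofVert] at h1 h2
  simp at h2
  have h4 : l 4 = 0 := by
    have : l 4 * l 4 = 0 := by linear_combination l 4 * h1 - e4 - e5 - e6 - e7
    simpa using this
  have key : ∀ (x y : ℝ) (u v : Fin 3 → ℝ), u ≠ v → x + y = 0 → (∀ m, x * u m + y * v m = 0) →
      x = 0 ∧ y = 0 := by
    intro x y u v huv hxy hm
    have hx : x = 0 := by
      by_contra hx
      apply huv
      funext m
      have : x * (u m - v m) = 0 := by linear_combination hm m - v m * hxy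
      exact sub_eq_zero.mp ((mul_eq_zero.mp this).resolve_left hx)
    exact ⟨hx, by linarith⟩
  have hcase : (l 0 = 0 ∧ l 1 = 0) ∨ (l 2 = 0 ∧ l 3 = 0) := by
    rcases mul_eq_zero.mp e0 with a | a <;> rcases mul_eq_zero.mp e3 with b | b <;>
    rcases mul_eq_zero.mp e1 with c | c <;> rcases mul_eq_zero.mp e2 with d | d <;> tauto
  have hall : l 0 = 0 ∧ l 1 = 0 ∧ l 2 = 0 ∧ l 3 = 0 := by
    rcases hcase with ⟨a, b⟩ | ⟨a, b⟩
    · have := key (l 2) (l 3) _ _ (hp i) (by linarith)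
        (fun m => by have := h2 m; rw [a, b, h4] at this; linarith)
      tauto
    · have := key (l 0) (l 1) _ _ (hp (i - 1)) (by linarith)
        (fun m => by have := h2 m; rw [a, b, h4] at this; linarith)
      tauto
  apply h0
  funext u
  fin_cases u
  · exact hall.1
  · exact hall.2.1
  · exact hall.2.2.1
  · exact hall.2.2.2
  · exact h4

/-- The rows of the ring of roofs together with the row of one hinge. -/
noncomputable def hingedRows {k : ℕ} (i₀ : ZMod k) (p : ZMod k × Fin 3 → Fin 3 → ℝ)
    (o : Option (ZMod k × Fin 8)) : ZMod k × Fin 3 → Fin 3 → ℝ :=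
  o.elim (hingeRow p i₀) (rows p)

/-- The `k` roof stresses have a nontrivial combination cancelling on the `k - 1` hinges other than
`i₀`. -/
lemma hingedRows_dependent {k : ℕ} [NeZero k] (i₀ : ZMod k) (p : ZMod k × Fin 3 → Fin 3 → ℝ)
    (hp : ∀ i : ZMod k, p (i, 0) ≠ p (i, 1)) : ¬ LinearIndependent ℝ (hingedRows i₀ p) := by
  choose l hl0 hl1 hl2 using fun i : ZMod k => exists_affine_dependence fun u => p (roofVert i u)
  -- the coefficient of the `j`-th hinge in the combination of the roof stresses with weights `t`
  let c : (ZMod k → ℝ) → ZMod k → ℝ := fun t j =>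
    t (j + 1) * (l (j + 1) 0 * l (j + 1) 1) + t j * (l j 2 * l j 3)
  let L : (ZMod k → ℝ) →ₗ[ℝ] ({j : ZMod k // j ≠ i₀} → ℝ) :=
    { toFun := fun t j => c t j
      map_add' := fun s t => by funext j; simp only [c, Pi.add_apply]; ring
      map_smul' := fun a t => by
        funext j; simp only [c, Pi.smul_apply, smul_eq_mul, RingHom.id_apply]; ring }
  have hL : LinearMap.ker L ≠ ⊥ := by
    apply LinearMap.ker_ne_bot_of_finrank_lt
    rw [Module.finrank_fintype_fun_eq_card, Module.finrank_fintype_fun_eq_card]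
    exact Fintype.card_subtype_lt (x := i₀) (by simp)
  obtain ⟨t, ht, hne⟩ := (Submodule.ne_bot_iff _).mp hL
  have ht' : ∀ j, j ≠ i₀ → c t j = 0 := fun j hj => congrFun ht ⟨j, hj⟩
  have hsum : ∑ e : ZMod k × Fin 8, (t e.1 * roofWeight (l e.1) e.2) • rows p e
      = -(c t i₀ • hingeRow p i₀) := by
    rw [Fintype.sum_prod_type]
    have h1 : ∀ i, ∑ j, (t i * roofWeight (l i) j) • rows p (i, j) =
        -((t i * (l i 0 * l i 1)) • hingeRow p (i - 1) + (t i * (l i 2 * l i 3)) • hingeRow p i) := by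
      intro i
      simp only [mul_smul]
      rw [← Finset.smul_sum, roof_stress p i (l i) (hl1 i) (hl2 i)]
      simp only [mul_smul, smul_neg, smul_add]
    simp only [h1]
    rw [Finset.sum_neg_distrib, Finset.sum_add_distrib]
    congr 1
    rw [← Equiv.sum_comp (Equiv.addRight (1 : ZMod k))]
    simp only [Equiv.coe_addRight, add_sub_cancel_right]
    rw [← Finset.sum_add_distrib]
    simp only [← add_smul]
    exact Finset.sum_eq_single i₀ (fun j _ hj => by
      have := ht' j hj
      simp only [c] at this
      rw [this, zero_smul]) (by simp)
  intro hli
  rw [Fintype.linearIndependent_iff] at hli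
  have := hli (fun o => o.elim (c t i₀) fun e => t e.1 * roofWeight (l e.1) e.2) (by
    rw [Fintype.sum_option]
    simp only [hingedRows, Option.elim_none, Option.elim_some]
    rw [hsum, add_neg_cancel])
  apply hne
  funext i
  by_contra hti
  apply roofWeight_ne_zero p hp i (l i) (hl0 i) (hl1 i) (hl2 i)
  funext j
  exact (mul_eq_zero.mp (this (some (i, j)))).resolve_left hti

lemma continuous_hingedRows {k : ℕ} (i₀ : ZMod k) : Continuous (hingedRows i₀) := by
  have h : ∀ u v : ZMod k × Fin 3,
      Continuous fun p : ZMod k × Fin 3 → Fin 3 → ℝ => rigidityRow p u v := by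
    intro u v
    refine continuous_pi fun w => continuous_pi fun m => ?_
    simp only [rigidityRow_apply]
    fun_prop
  refine continuous_pi fun o => ?_
  cases o with
  | none => exact h _ _
  | some e => exact h _ _

/-- Linear independence is an open condition and hinges can be made noncollapsed by an arbitrarily
small perturbation, so the dependence holds at every placement. -/
lemma hingedRows_dependent' {k : ℕ} [NeZero k] (i₀ : ZMod k) (p : ZMod k × Fin 3 → Fin 3 → ℝ) :
    ¬ LinearIndependent ℝ (hingedRows i₀ p) := by
  intro hli
  let d : ZMod k × Fin 3 → Fin 3 → ℝ := fun v _ => if v.2 = 1 then 1 else 0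
  let P : ℝ → ZMod k × Fin 3 → Fin 3 → ℝ := fun t => p + t • d
  have hP : Continuous P := by fun_prop
  have hopen : IsOpen {t | LinearIndependent ℝ (hingedRows i₀ (P t))} :=
    isOpen_setOfPred_linearIndependent.preimage ((continuous_hingedRows i₀).comp hP)
  have h1 : ∀ᶠ t in nhdsWithin (0 : ℝ) {0}ᶜ, LinearIndependent ℝ (hingedRows i₀ (P t)) :=
    nhdsWithin_le_nhds (hopen.mem_nhds (by simpa [P] using hli))
  have h2 : ∀ᶠ t in nhdsWithin (0 : ℝ) {0}ᶜ, ∀ i : ZMod k, P t (i, 0) ≠ P t (i, 1) := by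
    rw [Filter.eventually_all]
    intro i
    have : ∀ᶠ t in nhdsWithin (0 : ℝ) {0}ᶜ, t ≠ p (i, 0) 0 - p (i, 1) 0 := by
      by_cases h : (0 : ℝ) = p (i, 0) 0 - p (i, 1) 0
      · rw [← h]; exact self_mem_nhdsWithin
      · exact eventually_ne_nhdsWithin h
    filter_upwards [this] with t ht heq
    apply ht
    have := congrFun heq 0
    simp [P, d] at this
    linarith
  obtain ⟨t, ht1, ht2⟩ := (h1.and h2).exists
  exact hingedRows_dependent i₀ (P t) ht2 ht1

lemma genRank_addHinge_le {k : ℕ} [NeZero k] (i : ZMod k) :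
    genRank (addEdge (ringOfRoofs k) (i, 0) (i, 1)) ≤ 8 * k := by
  apply genRank_le
  intro p
  have h := mt linearIndependent_iff_card_le_finrank_span.mpr (hingedRows_dependent' i p)
  rw [Fintype.card_option, card_ix, Set.finrank] at h
  refine le_trans (Submodule.finrank_mono (Submodule.span_mono ?_)) (by omega :
    Module.finrank ℝ (Submodule.span ℝ (Set.range (hingedRows i p))) ≤ 8 * k)
  rintro _ ⟨u, v, huv, rfl⟩
  simp only [addEdge, SimpleGraph.sup_adj, SimpleGraph.fromEdgeSet_adj, Set.mem_singleton_iff,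
    Sym2.eq_iff] at huv
  rcases huv with h | ⟨⟨rfl, rfl⟩ | ⟨rfl, rfl⟩, -⟩
  · obtain ⟨e, he | he⟩ := exists_roofEnds h
    · exact ⟨some e, by simp [hingedRows, rows, he]⟩
    · exact ⟨some e, by rw [rigidityRow_comm]; simp [hingedRows, rows, he]⟩
  · exact ⟨none, rfl⟩
  · exact ⟨none, by rw [rigidityRow_comm]; rfl⟩

/-! ### Sparsity of the ring of roofs -/

/-- The number of edges of the ring of roofs spanned by a vertex set containing `n i` of the two
vertices of the `i`-th hinge and `c i` of the one apex of the `i`-th roof. -/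
def edgeCount {k : ℕ} [NeZero k] (n c : ZMod k → ℕ) : ℕ :=
  ∑ i, (n (i - 1) * n i + c i * (n (i - 1) + n i))

/-- The size of a vertex set described as in `edgeCount`. -/
def vertexCount {k : ℕ} [NeZero k] (n c : ZMod k → ℕ) : ℕ := ∑ i, (n i + c i)

/-- The bound proved below on the number of edges spanned by `s` vertices: `0, 0, 1, 3` for
`s = 0, 1, 2, 3`, and `3 * s - 7` for `s ≥ 4`. -/
def edgeBound (s : ℕ) : ℕ := if s ≤ 1 then 0 else if s = 2 then 1 else if s = 3 then 3 else 3 * s - 7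

/-- The hinges `j - 1`, `j`, `j + 1` are distinct, so the vertices there are counted at most once. -/
lemma window_le {k : ℕ} [NeZero k] (hk : 7 ≤ k) (n c : ZMod k → ℕ) (j : ZMod k) :
    n (j - 1) + n j + n (j + 1) + c j + c (j + 1) ≤ vertexCount n c := by
  have : Fact (1 < k) := ⟨by omega⟩
  have h2 : (2 : ZMod k) ≠ 0 := by
    intro h
    have := (ZMod.natCast_eq_zero_iff 2 k).mp (by exact_mod_cast h)
    have := Nat.le_of_dvd (by norm_num) this
    omega
  have ha : j - 1 ≠ j := by simp
  have hb : j ≠ j + 1 := by simp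
  have hc : j - 1 ≠ j + 1 := by
    intro h
    apply h2
    linear_combination -h
  have := Finset.sum_le_univ_sum_of_nonneg (s := {j - 1, j, j + 1})
    (f := fun i => n i + c i) (fun _ => Nat.zero_le _)
  rw [Finset.sum_insert (by simp [ha, hc]), Finset.sum_insert (by simp), Finset.sum_singleton] at this
  unfold vertexCount
  omega

lemma edgeCount_add_hinge {k : ℕ} [NeZero k] (hk : 7 ≤ k) (n c : ZMod k → ℕ) (j : ZMod k) :
    edgeCount (n + Pi.single j 1) c =
      edgeCount n c + (n (j - 1) + n (j + 1) + c j + c (j + 1)) := by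
  have : Fact (1 < k) := ⟨by omega⟩
  have e : ∀ x : ZMod k, x - 1 = j ↔ x = j + 1 := fun x => sub_eq_iff_eq_add
  simp [edgeCount, Pi.single_apply, add_mul, mul_add, Finset.sum_add_distrib, e]
  ring

lemma edgeCount_add_apex {k : ℕ} [NeZero k] (n c : ZMod k → ℕ) (j : ZMod k) :
    edgeCount n (c + Pi.single j 1) = edgeCount n c + (n (j - 1) + n j) := by
  simp [edgeCount, Pi.single_apply, add_mul, mul_add, Finset.sum_add_distrib]
  ring

lemma vertexCount_add_hinge {k : ℕ} [NeZero k] (n c : ZMod k → ℕ) (j : ZMod k) :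
    vertexCount (n + Pi.single j 1) c = vertexCount n c + 1 := by
  simp [vertexCount, Pi.single_apply, Finset.sum_add_distrib]
  ring

lemma vertexCount_add_apex {k : ℕ} [NeZero k] (n c : ZMod k → ℕ) (j : ZMod k) :
    vertexCount n (c + Pi.single j 1) = vertexCount n c + 1 := by
  simp [vertexCount, Pi.single_apply, Finset.sum_add_distrib]
  ring

lemma exists_eq_add_single {k : ℕ} {n : ZMod k → ℕ} {j : ZMod k} (h : 1 ≤ n j) :
    ∃ n' : ZMod k → ℕ, n = n' + Pi.single j 1 := by
  refine ⟨n - Pi.single j 1, ?_⟩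
  funext i
  by_cases hi : i = j
  · subst hi; simp; omega
  · simp [hi]

/-- A nonempty vertex set with all degrees at least four meets every hinge and contains with an apex
the whole roof; the count then follows by adding up, over all roofs, local contributions. -/
lemma edgeCount_le_of_four_le {k : ℕ} [NeZero k] (hk : 7 ≤ k) (n c : ZMod k → ℕ)
    (hn : ∀ i, n i ≤ 2) (hc : ∀ i, c i ≤ 1) (h0 : vertexCount n c ≠ 0)
    (dn : ∀ j, 1 ≤ n j → 4 ≤ n (j - 1) + n (j + 1) + c j + c (j + 1))
    (dc : ∀ j, 1 ≤ c j → 4 ≤ n (j - 1) + n j) :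
    edgeCount n c + 7 ≤ 3 * vertexCount n c := by
  obtain ⟨i₀, hi₀⟩ : ∃ i, 1 ≤ n i := by
    by_contra! h
    apply h0
    apply Finset.sum_eq_zero
    intro i _
    have := h i
    have := h (i - 1)
    have := dc i
    omega
  have hstep : ∀ i, 1 ≤ n i → 1 ≤ n (i + 1) := by
    intro i hi
    have h1 := dn i hi
    have h2 := dc (i + 1)
    rw [add_sub_cancel_right] at h2
    have := hn (i - 1)
    have := hn i
    have := hc i
    have := hc (i + 1)
    omega
  have hpos : ∀ i, 1 ≤ n i := by
    have h1 : ∀ m : ℕ, 1 ≤ n (i₀ + m) := by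
      intro m
      induction m with
      | zero => simpa using hi₀
      | succ m ih =>
        have := hstep _ ih
        rwa [add_assoc, ← Nat.cast_succ] at this
    intro i
    have := h1 (i - i₀).val
    rwa [ZMod.natCast_rightInverse, add_sub_cancel] at this
  have hloc : ∀ i, 2 * (n (i - 1) * n i + c i * (n (i - 1) + n i)) + 2 ≤
      3 * n (i - 1) + 3 * n i + 6 * c i := by
    intro i
    have h1 := hpos i
    have h2 := hn i
    have h3 := hpos (i - 1)
    have h4 := hn (i - 1)
    have h5 := hc i
    have h6 := dc i
    generalize n i = x at *
    generalize n (i - 1) = y at *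
    generalize c i = z at *
    interval_cases x <;> interval_cases y <;> interval_cases z <;> omega
  have hsum := Finset.sum_le_sum fun i (_ : i ∈ Finset.univ) => hloc i
  have hshift : ∑ i, n (i - 1) = ∑ i, n i := Equiv.sum_comp (Equiv.subRight (1 : ZMod k)) n
  simp only [Finset.sum_add_distrib, ← Finset.mul_sum, hshift] at hsum
  simp only [Finset.sum_const, Finset.card_univ, ZMod.card, smul_eq_mul] at hsum
  simp only [edgeCount, vertexCount, Finset.sum_add_distrib]
  omega

/-- Induction on the number of vertices: a vertex of small degree is removed, and if there is none
the set has at least five vertices, all of degree at least four. -/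
lemma edgeCount_le {k : ℕ} [NeZero k] (hk : 7 ≤ k) (s : ℕ) : ∀ n c : ZMod k → ℕ,
    (∀ i, n i ≤ 2) → (∀ i, c i ≤ 1) → vertexCount n c = s → edgeCount n c ≤ edgeBound s := by
  induction s with
  | zero =>
    intro n c hn hc hs
    have hw := fun j => window_le hk n c j
    rw [hs] at hw
    have : edgeCount n c = 0 := by
      apply Finset.sum_eq_zero
      intro i _
      have := hw i
      have h1 : n i = 0 := by omega
      have h2 : c i = 0 := by omega
      simp [h1, h2]
    omega
  | succ s ih =>
    intro n c hn hc hs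
    by_cases dn : ∃ j, 1 ≤ n j ∧
        edgeBound s + (n (j - 1) + n (j + 1) + c j + c (j + 1)) ≤ edgeBound (s + 1)
    · have : Fact (1 < k) := ⟨by omega⟩
      obtain ⟨j, hj, hd⟩ := dn
      obtain ⟨n', rfl⟩ := exists_eq_add_single hj
      rw [vertexCount_add_hinge] at hs
      rw [edgeCount_add_hinge hk]
      have := ih n' c (fun i => le_trans (by simp) (hn i)) hc (by omega)
      simp at hd
      omega
    by_cases dc : ∃ j, 1 ≤ c j ∧ edgeBound s + (n (j - 1) + n j) ≤ edgeBound (s + 1)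
    · obtain ⟨j, hj, hd⟩ := dc
      obtain ⟨c', rfl⟩ := exists_eq_add_single hj
      rw [vertexCount_add_apex] at hs
      rw [edgeCount_add_apex]
      have := ih n c' hn (fun i => le_trans (by simp) (hc i)) (by omega)
      omega
    push Not at dn dc
    have hw := fun j => window_le hk n c j
    rw [hs] at hw
    have hne : ∀ h : ∀ j, n j = 0 ∧ c j = 0, False := by
      intro h
      have : vertexCount n c = 0 := Finset.sum_eq_zero fun i _ => by simp [h i]
      omega
    rcases Nat.lt_or_ge s 4 with h4 | h4
    · exfalso
      have hn1 : ∀ j, n j ≤ 1 := by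
        intro j
        have h1 := hw j
        have h2 := dn j
        interval_cases s <;> simp [edgeBound] at h2 <;> omega
      have hc0 : ∀ j, c j = 0 := by
        intro j
        have h1 := hw j
        have h2 := dc j
        have h3 := hn1 j
        have h4 := hn1 (j - 1)
        interval_cases s <;> simp [edgeBound] at h2 <;> omega
      refine hne fun j => ⟨?_, hc0 j⟩
      have h1 := hw j
      have h2 := dn j
      have h3 := hn1 (j - 1)
      have h4 := hn1 (j + 1)
      have h5 := hc0 j
      have h6 := hc0 (j + 1)
      interval_cases s <;> simp [edgeBound] at h2 <;> omega
    · have e1 : edgeBound (s + 1) = 3 * (s + 1) - 7 := by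
        simp only [edgeBound]; split_ifs <;> omega
      have e2 : edgeBound s = 3 * s - 7 := by
        simp only [edgeBound]; split_ifs <;> omega
      have := edgeCount_le_of_four_le hk n c hn hc (by omega)
        (fun j hj => by have := dn j hj; omega) (fun j hj => by have := dc j hj; omega)
      omega

lemma numEdges_induce_le {k : ℕ} [NeZero k] (hk : 7 ≤ k) (S : Finset (ZMod k × Fin 3))
    (hS : 5 ≤ S.card) :
    numEdges ((ringOfRoofs k).induce (S : Set (ZMod k × Fin 3))) + 7 ≤ 3 * S.card := by
  classical
  let x : ZMod k → Fin 3 → ℕ := fun i m => if (i, m) ∈ S then 1 else 0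
  have hx : ∀ i m, x i m ≤ 1 := by
    intro i m; simp only [x]; split_ifs <;> omega
  let n : ZMod k → ℕ := fun i => x i 0 + x i 1
  let c : ZMod k → ℕ := fun i => x i 2
  have hcard : vertexCount n c = S.card := by
    have : S.card = ∑ v : ZMod k × Fin 3, if v ∈ S then 1 else 0 := by simp
    rw [this, Fintype.sum_prod_type]
    apply Finset.sum_congr rfl
    intro i _
    rw [Fin.sum_univ_three]
  let T : Finset (ZMod k × Fin 8) :=
    Finset.univ.filter fun e => (roofEnds e).1 ∈ S ∧ (roofEnds e).2 ∈ S
  have hT : T.card = edgeCount n c := by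
    rw [Finset.card_filter, Fintype.sum_prod_type]
    apply Finset.sum_congr rfl
    intro i _
    have hand : ∀ (a b : ZMod k × Fin 3), (if a ∈ S ∧ b ∈ S then 1 else 0) =
        x a.1 a.2 * x b.1 b.2 := by
      intro a b; simp only [x]; split_ifs <;> simp_all
    simp only [hand]
    simp [Fin.sum_univ_eight, roofEnds, n, c]
    ring
  have hedge : numEdges ((ringOfRoofs k).induce (S : Set (ZMod k × Fin 3))) ≤ T.card := by
    let f : ZMod k × Fin 8 → Sym2 (ZMod k × Fin 3) := fun e => s((roofEnds e).1, (roofEnds e).2)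
    have hinj : Function.Injective (Sym2.map (Subtype.val : ↥(S : Set (ZMod k × Fin 3)) → ZMod k × Fin 3)) :=
      Sym2.map.injective Subtype.val_injective
    unfold numEdges
    rw [← Set.ncard_image_of_injective _ hinj, ← Set.ncard_coe_finset T]
    refine le_trans (Set.ncard_le_ncard (t := f '' T) ?_ (Set.toFinite _))
      (Set.ncard_image_le (Set.toFinite _))
    rintro _ ⟨s, hs, rfl⟩
    induction s with
    | _ u v =>
      obtain ⟨e, he | he⟩ := exists_roofEnds (u := u.1) (v := v.1) hs
      · exact ⟨e, by simp [T, he], by simp [f, he]⟩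
      · exact ⟨e, by simp [T, he], by simp [f, he, Sym2.eq_swap]⟩
  have hb := edgeCount_le hk S.card n c (fun i => Nat.add_le_add (hx i 0) (hx i 1))
    (fun i => hx i 2) hcard
  have e1 : edgeBound S.card = 3 * S.card - 7 := by
    simp only [edgeBound]; split_ifs <;> omega
  omega

/-! ### The theorem -/

/-- For `k ≥ 7`, every hinge non-edge `{aᵢ,bᵢ} = {(i,0),(i,1)}` of the ring of roofs
`R_k` is an implied non-edge, `rk₃(R_k) = 8k`, and `R_k` is nucleation-free and
independent in ℝ³. -/
theorem ringOfRoofs_hinges_implied (k : ℕ) (hk : 7 ≤ k) :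
    (∀ i : ZMod k, IsImpliedNonEdge (ringOfRoofs k) (i, 0) (i, 1)) ∧
    genRank (ringOfRoofs k) = 8 * k ∧
    NucleationFree (ringOfRoofs k) ∧
    IsIndependent (ringOfRoofs k) := by
  have : NeZero k := ⟨by omega⟩
  have : Fact (1 < k) := ⟨by omega⟩
  have hlow : ∀ G, ringOfRoofs k ≤ G → 8 * k ≤ genRank G :=
    le_genRank_of_linearIndependent hk _ (special_linearIndependent hk)
  have h1 := hlow _ le_rfl
  have h2 := genRank_le_numEdges (ringOfRoofs k)
  have h3 := numEdges_le k
  have hrank : genRank (ringOfRoofs k) = 8 * k := by omega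
  refine ⟨fun i => ⟨by simp, ?_, ?_⟩, hrank, fun S hS => ?_, by unfold IsIndependent; omega⟩
  · simp [ringOfRoofs]
  · rw [hrank]
    exact le_antisymm (genRank_addHinge_le i) (hlow _ le_sup_left)
  · have h4 := numEdges_induce_le hk S hS
    have h5 := genRank_le_numEdges ((ringOfRoofs k).induce (S : Set (ZMod k × Fin 3)))
    omega
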